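/- Let H be a 4-uniform hypergraph and define the weight w(H) = 852·m(H) + Σ_{v ∈ V(H)} f(d_H(v)), where f depends on the maximum degree Δ(H) as follows: if Δ(H) ≥ 5 then f(d) = 852 for every d ≥ 1; if Δ(H) = 4 then f(4) = 852, f(3) = 845, f(2) = 838, f(1) = 831; if Δ(H) = 3 then f(3) = 845, f(2) = 750, f(1) = 655; if Δ(H) ≤ 2 then f(2) = 750, f(1) = 543; and in every case f(0) = 0. Then 3024 τ_g(H) ≤ w(H). -/

import Mathlib

variable {V : Type} [Fintype V] [DecidableEq V]

/-- The set of legal moves in the transversal game with uncovered edge set `E`: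
the vertices hitting at least one uncovered edge. -/
def playable (E : Finset (Finset V)) : Finset V :=
  Finset.univ.filter (fun v => ∃ e ∈ E, v ∈ e)

/-- The number of moves remaining in the transversal game with uncovered edge set `E`
under optimal play, where `ehTurn = true` iff Edge-hitter (the minimizer) moves next;
Staller (the maximizer) moves next iff `ehTurn = false`.  Each move must hit at least
one uncovered edge, and the game ends when no uncovered edge remains. -/
def gameVal (ehTurn : Bool) (E : Finset (Finset V)) : ℕ :=
  if h : (playable E).Nonempty then
    1 +
      (if ehTurn then
        (playable E).attach.inf' (Finset.attach_nonempty_iff.mpr h)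
          (fun v => gameVal (!ehTurn) (E.filter (fun e => v.1 ∉ e)))
      else
        (playable E).attach.sup' (Finset.attach_nonempty_iff.mpr h)
          (fun v => gameVal (!ehTurn) (E.filter (fun e => v.1 ∉ e))))
  else 0
termination_by E.card
decreasing_by
  all_goals
    obtain ⟨v, hv⟩ := v
    simp only [playable, Finset.mem_filter, Finset.mem_univ, true_and] at hv
    obtain ⟨e, he, hve⟩ := hv
    exact Finset.card_lt_card (Finset.filter_ssubset.mpr ⟨e, he, by simp [hve]⟩)

/-- The game transversal number `τ_g`: Edge-hitter makes the first move. -/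
def gameTransversalNum (E : Finset (Finset V)) : ℕ := gameVal true E

/-- The Staller-start game transversal number `τ_g'`: Staller makes the first move. -/
def stallerGameTransversalNum (E : Finset (Finset V)) : ℕ := gameVal false E

/-- The transversal number `τ`: the minimum size of a set of vertices meeting all edges. -/
noncomputable def transversalNum (E : Finset (Finset V)) : ℕ :=
  sInf {n | ∃ T : Finset V, (∀ e ∈ E, ∃ v ∈ T, v ∈ e) ∧ T.card = n}

/-- The degree of a vertex `v`: the number of edges containing `v`. -/
def degree (E : Finset (Finset V)) (v : V) : ℕ := (E.filter (fun e => v ∈ e)).card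

/-- The maximum degree `Δ(H)`. -/
def maxDegree (E : Finset (Finset V)) : ℕ := Finset.univ.sup (degree E)

/-- The weight `f(d)` of a vertex of degree `d`, depending on the maximum degree `Δ`:
if `Δ ≥ 5` then `f(d) = 852` for every `d ≥ 1`; if `Δ = 4` then `f(4) = 852`,
`f(3) = 845`, `f(2) = 838`, `f(1) = 831`; if `Δ = 3` then `f(3) = 845`, `f(2) = 750`,
`f(1) = 655`; if `Δ ≤ 2` then `f(2) = 750`, `f(1) = 543`; and `f(0) = 0` always. -/
def vertexWeight (Δ d : ℕ) : ℕ :=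
  if d = 0 then 0
  else if 5 ≤ Δ then 852
  else if Δ = 4 then (if d = 4 then 852 else if d = 3 then 845 else if d = 2 then 838 else 831)
  else if Δ = 3 then (if d = 3 then 845 else if d = 2 then 750 else 655)
  else if d = 2 then 750 else 543

/-- The residual hypergraph after choosing `v`. -/
def delV (E : Finset (Finset V)) (v : V) : Finset (Finset V) := E.filter (fun e => v ∉ e)

/-- The set of vertices of degree two. -/
def degTwo (E : Finset (Finset V)) : Finset V := Finset.univ.filter (fun v => degree E v = 2)

lemma mem_playable {E : Finset (Finset V)} {v : V} : v ∈ playable E ↔ ∃ e ∈ E, v ∈ e := by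
  simp [playable]

lemma gameVal_true_le (E : Finset (Finset V)) (v : V) (hv : v ∈ playable E) :
    gameVal true E ≤ 1 + gameVal false (delV E v) := by
  rw [gameVal, dif_pos ⟨v, hv⟩]
  simp only [if_true, Bool.not_true]
  have := Finset.inf'_le (s := (playable E).attach)
    (fun w : {x // x ∈ playable E} => gameVal false (E.filter (fun e => w.1 ∉ e)))
    (Finset.mem_attach _ ⟨v, hv⟩)
  exact Nat.add_le_add_left this 1

lemma gameVal_false_cases (E : Finset (Finset V)) :
    gameVal false E = 0 ∨
      ∃ v ∈ playable E, gameVal false E = 1 + gameVal true (delV E v) := by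
  by_cases h : (playable E).Nonempty
  · right
    obtain ⟨w, -, hw⟩ := Finset.exists_mem_eq_sup' (Finset.attach_nonempty_iff.mpr h)
      (fun w : {x // x ∈ playable E} => gameVal true (E.filter (fun e => w.1 ∉ e)))
    refine ⟨w.1, w.2, ?_⟩
    rw [gameVal, dif_pos h]
    simp only [Bool.false_eq_true, if_false, Bool.not_false]
    rw [hw]
    rfl
  · left
    rw [gameVal, dif_neg h]

lemma gameVal_true_eq_zero (E : Finset (Finset V)) (h : ¬ (playable E).Nonempty) :
    gameVal true E = 0 := by
  rw [gameVal, dif_neg h]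

/-- One round of the game. -/
lemma game_round_le (E : Finset (Finset V)) (v : V) (hv : v ∈ playable E) :
    gameVal true E ≤ 1 ∨ ∃ u ∈ playable (delV E v),
      gameVal true E ≤ 2 + gameVal true (delV (delV E v) u) := by
  have h1 := gameVal_true_le E v hv
  rcases gameVal_false_cases (delV E v) with h | ⟨u, hu, h⟩
  · left; omega
  · right; exact ⟨u, hu, by omega⟩

lemma delV_subset (E : Finset (Finset V)) (v : V) : delV E v ⊆ E := Finset.filter_subset _ _

lemma card_delV (E : Finset (Finset V)) (v : V) : (delV E v).card + degree E v = E.card := by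
  have := Finset.card_filter_add_card_filter_not (s := E) (fun e => v ∈ e)
  unfold delV degree
  omega

lemma degree_pos {E : Finset (Finset V)} {v : V} : v ∈ playable E ↔ 0 < degree E v := by
  rw [mem_playable, degree, Finset.card_pos]
  constructor
  · rintro ⟨e, he, hv⟩; exact ⟨e, by simp [he, hv]⟩
  · rintro ⟨e, he⟩; simp at he; exact ⟨e, he⟩

lemma degree_mono {E F : Finset (Finset V)} (h : E ⊆ F) (v : V) : degree E v ≤ degree F v :=
  Finset.card_le_card (Finset.filter_subset_filter _ h)

lemma degree_delV_self (E : Finset (Finset V)) (v : V) : degree (delV E v) v = 0 := by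
  unfold degree delV
  rw [Finset.card_eq_zero, Finset.filter_filter]
  apply Finset.filter_false_of_mem
  tauto

lemma sum_degree (E : Finset (Finset V)) : ∑ v, degree E v = ∑ e ∈ E, e.card := by
  unfold degree
  simp_rw [Finset.card_filter]
  rw [Finset.sum_comm]
  apply Finset.sum_congr rfl
  intro e _
  simp

lemma sum_degree_four (E : Finset (Finset V)) (h4 : ∀ e ∈ E, e.card = 4) :
    ∑ v, degree E v = 4 * E.card := by
  rw [sum_degree, Finset.sum_congr rfl h4]
  simp [mul_comm]

lemma gameVal_true_le_card (n : ℕ) : ∀ E : Finset (Finset V), E.card = n →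
    gameVal true E ≤ E.card := by
  induction n using Nat.strong_induction_on with
  | _ n ih =>
    intro E hE
    by_cases h : (playable E).Nonempty
    · obtain ⟨v, hv⟩ := h
      have h1 := card_delV E v
      have h2 := degree_pos.1 hv
      rcases game_round_le E v hv with h | ⟨u, hu, h⟩
      · omega
      · have h3 := card_delV (delV E v) u
        have h4 := degree_pos.1 hu
        have := ih _ (by omega) (delV (delV E v) u) rfl
        omega
    · rw [gameVal_true_eq_zero E h]; omega

/-- Weight drop for one move. -/
lemma weight_drop (E : Finset (Finset V)) (h4 : ∀ e ∈ E, e.card = 4) (g : ℕ → ℕ) (c M : ℕ)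
    (hM : ∀ u, degree E u ≤ M) (h0 : g 0 = 0) (hg : ∀ a b, a ≤ b → b ≤ M → g a + c * (b - a) ≤ g b)
    (v : V) :
    (852 * (delV E v).card + ∑ u, g (degree (delV E v) u)) + 852 * degree E v + g (degree E v)
      + 3 * c * degree E v ≤ 852 * E.card + ∑ u, g (degree E u) := by
  have hc := card_delV E v
  have s1 := sum_degree_four E h4
  have s2 := sum_degree_four (delV E v) (fun e he => h4 e (delV_subset E v he))
  have hz := degree_delV_self E v
  rw [← Finset.add_sum_erase _ _ (Finset.mem_univ v)] at s1 s2
  rw [← Finset.add_sum_erase _ (fun u => g (degree E u)) (Finset.mem_univ v),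
    ← Finset.add_sum_erase _ (fun u => g (degree (delV E v) u)) (Finset.mem_univ v)]
  have key : ∑ u ∈ Finset.univ.erase v, (g (degree (delV E v) u) + c * degree E u) ≤
      ∑ u ∈ Finset.univ.erase v, (g (degree E u) + c * degree (delV E v) u) := by
    apply Finset.sum_le_sum
    intro u _
    have hm := degree_mono (delV_subset E v) u
    have := hg _ _ hm (hM u)
    obtain ⟨k, hk⟩ := Nat.exists_eq_add_of_le hm
    rw [hk] at this ⊢
    rw [Nat.add_sub_cancel_left] at this
    nlinarith
  rw [Finset.sum_add_distrib, Finset.sum_add_distrib, ← Finset.mul_sum, ← Finset.mul_sum] at key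
  simp only [hz, h0] at *
  have e1 : ∑ u ∈ Finset.univ.erase v, degree E u
      = ∑ u ∈ Finset.univ.erase v, degree (delV E v) u + 3 * degree E v := by omega
  rw [e1] at key
  nlinarith

lemma three_edges {E : Finset (Finset V)} (h2 : ∀ u, degree E u ≤ 2) {a b c : Finset V} {u : V}
    (ha : a ∈ E) (hb : b ∈ E) (hc : c ∈ E) (hua : u ∈ a) (hub : u ∈ b) (huc : u ∈ c)
    (hab : a ≠ b) (hac : a ≠ c) (hbc : b ≠ c) : False := by
  have h : ({a, b, c} : Finset (Finset V)) ⊆ E.filter (fun e => u ∈ e) := by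
    intro x hx
    simp only [Finset.mem_insert, Finset.mem_singleton] at hx
    rcases hx with rfl | rfl | rfl <;> simp [*]
  have := Finset.card_le_card h
  rw [Finset.card_eq_three.2 ⟨a, b, c, hab, hac, hbc, rfl⟩] at this
  have := h2 u
  unfold degree at this
  omega

lemma mem_degTwo {E : Finset (Finset V)} (h2 : ∀ u, degree E u ≤ 2) {a b : Finset V} {u : V}
    (ha : a ∈ E) (hb : b ∈ E) (hua : u ∈ a) (hub : u ∈ b) (hab : a ≠ b) : u ∈ degTwo E := by
  have h : ({a, b} : Finset (Finset V)) ⊆ E.filter (fun e => u ∈ e) := by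
    intro x hx
    simp only [Finset.mem_insert, Finset.mem_singleton] at hx
    rcases hx with rfl | rfl <;> simp [*]
  have := Finset.card_le_card h
  rw [Finset.card_pair hab] at this
  have := h2 u
  simp only [degTwo, Finset.mem_filter, Finset.mem_univ, true_and]
  unfold degree at *
  omega

lemma exists_other {E : Finset (Finset V)} {a : Finset V} {u : V} (hu : u ∈ degTwo E)
    : ∃ b ∈ E, b ≠ a ∧ u ∈ b := by
  simp only [degTwo, Finset.mem_filter, Finset.mem_univ, true_and] at hu
  unfold degree at hu
  obtain ⟨b, hb, hba⟩ := Finset.exists_mem_ne (by omega : 1 < (E.filter (fun e => u ∈ e)).card) a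
  simp at hb
  exact ⟨b, hb.1, hba, hb.2⟩

lemma mem_degTwo_delV {E : Finset (Finset V)} (h2 : ∀ u, degree E u ≤ 2) (v u : V) :
    u ∈ degTwo (delV E v) ↔ u ∈ degTwo E ∧ ∀ e ∈ E, v ∈ e → u ∉ e := by
  have hsub : (delV E v).filter (fun e => u ∈ e) ⊆ E.filter (fun e => u ∈ e) :=
    Finset.filter_subset_filter _ (delV_subset E v)
  simp only [degTwo, Finset.mem_filter, Finset.mem_univ, true_and]
  unfold degree
  constructor
  · intro h
    have hle := Finset.card_le_card hsub
    have h2u := h2 u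
    unfold degree at h2u
    have heq := Finset.eq_of_subset_of_card_le hsub (by omega)
    refine ⟨by omega, fun e he hve hue => ?_⟩
    have : e ∈ (delV E v).filter (fun e => u ∈ e) := by rw [heq]; simp [he, hue]
    simp [delV] at this
    tauto
  · rintro ⟨h, hne⟩
    rw [← h]
    congr 1
    apply Finset.Subset.antisymm hsub
    intro e he
    simp only [Finset.mem_filter, delV] at he ⊢
    exact ⟨⟨he.1, fun hv => hne e he.1 hv he.2⟩, he.2⟩

/-- A move hitting exactly two edges. -/
lemma move_two {E : Finset (Finset V)} (h2 : ∀ u, degree E u ≤ 2) {e f : Finset V} {v : V}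
    (he : e ∈ E) (hf : f ∈ E) (hve : v ∈ e) (hvf : v ∈ f) (hef : e ≠ f) :
    degTwo (delV E v) = degTwo E \ (e ∪ f) ∧ (delV E v).card + 2 = E.card ∧
      (degTwo (delV E v)).card + (degTwo E ∩ (e ∪ f)).card = (degTwo E).card ∧
      ∀ g, g ∈ delV E v ↔ g ∈ E ∧ g ≠ e ∧ g ≠ f := by
  have hev : ∀ g ∈ E, v ∈ g → g = e ∨ g = f := by
    intro g hg hvg
    by_contra hcon
    push Not at hcon
    exact three_edges h2 hg he hf hvg hve hvf hcon.1 hcon.2 hef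
  have h1 : degTwo (delV E v) = degTwo E \ (e ∪ f) := by
    ext u
    rw [mem_degTwo_delV h2]
    simp only [Finset.mem_sdiff, Finset.mem_union, not_or]
    constructor
    · rintro ⟨h, h'⟩; exact ⟨h, h' e he hve, h' f hf hvf⟩
    · rintro ⟨h, h', h''⟩
      refine ⟨h, fun g hg hvg => ?_⟩
      rcases hev g hg hvg with rfl | rfl <;> assumption
  refine ⟨h1, ?_, ?_, ?_⟩
  · have hd := mem_degTwo h2 he hf hve hvf hef
    simp only [degTwo, Finset.mem_filter, Finset.mem_univ, true_and] at hd
    have := card_delV E v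
    omega
  · rw [h1]; exact Finset.card_sdiff_add_card_inter _ _
  · intro g
    simp only [delV, Finset.mem_filter]
    constructor
    · rintro ⟨h, h'⟩
      exact ⟨h, fun h => h' (h ▸ hve), fun h => h' (h ▸ hvf)⟩
    · rintro ⟨h, h', h''⟩
      refine ⟨h, fun hvg => ?_⟩
      rcases hev g h hvg with h | h <;> tauto

/-- A move hitting exactly one edge. -/
lemma move_one {E : Finset (Finset V)} (h2 : ∀ u, degree E u ≤ 2) {v : V}
    (hv : degree E v = 1) :
    ∃ e ∈ E, v ∈ e ∧ v ∉ degTwo E ∧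
      degTwo (delV E v) = degTwo E \ e ∧ (delV E v).card + 1 = E.card ∧
      (degTwo (delV E v)).card + (degTwo E ∩ e).card = (degTwo E).card ∧
      ∀ g, g ∈ delV E v ↔ g ∈ E ∧ g ≠ e := by
  obtain ⟨e, hee⟩ := Finset.card_eq_one.1 hv
  have hev : ∀ g, (g ∈ E ∧ v ∈ g) ↔ g = e := by
    intro g
    rw [← Finset.mem_singleton, ← hee, Finset.mem_filter]
  obtain ⟨he, hve⟩ := (hev e).2 rfl
  have h1 : degTwo (delV E v) = degTwo E \ e := by
    ext u
    rw [mem_degTwo_delV h2]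
    simp only [Finset.mem_sdiff]
    constructor
    · rintro ⟨h, h'⟩; exact ⟨h, h' e he hve⟩
    · rintro ⟨h, h'⟩
      refine ⟨h, fun g hg hvg => ?_⟩
      rw [(hev g).1 ⟨hg, hvg⟩]; exact h'
  refine ⟨e, he, hve, ?_, h1, ?_, ?_, ?_⟩
  · simp [degTwo, hv]
  · have := card_delV E v
    omega
  · rw [h1]; exact Finset.card_sdiff_add_card_inter _ _
  · intro g
    simp only [delV, Finset.mem_filter]
    constructor
    · rintro ⟨h, h'⟩
      exact ⟨h, fun h => h' (h ▸ hve)⟩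
    · rintro ⟨h, h'⟩
      exact ⟨h, fun hvg => h' ((hev g).1 ⟨h, hvg⟩)⟩

/-- Some edge contains vertices of degree two, but not only those. -/
def Damaged (E : Finset (Finset V)) : Prop :=
  ∃ e ∈ E, 1 ≤ (degTwo E ∩ e).card ∧ (degTwo E ∩ e).card ≤ 3

/-- The bound for hypergraphs of maximum degree at most two. -/
def Good (E : Finset (Finset V)) : Prop :=
  9 * gameVal true E + (degTwo E).card ≤ 9 * E.card ∧
    (Damaged E → 9 * gameVal true E + (degTwo E).card + 1 ≤ 9 * E.card)

lemma cap_union {E : Finset (Finset V)} (h2 : ∀ u, degree E u ≤ 2)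
    {e f : Finset V} (he : e ∈ E) (hf : f ∈ E) (hef : e ≠ f) :
    (degTwo E ∩ (e ∪ f)).card + (e ∩ f).card = (degTwo E ∩ e).card + (degTwo E ∩ f).card := by
  rw [Finset.inter_union_distrib_left,
    ← Finset.card_union_add_card_inter (degTwo E ∩ e) (degTwo E ∩ f)]
  congr 2
  ext u
  simp only [Finset.mem_inter]
  constructor
  · rintro ⟨h, h'⟩
    have := mem_degTwo h2 he hf h h' hef
    tauto
  · tauto

lemma pair_lemma {E : Finset (Finset V)} (h4 : ∀ e ∈ E, e.card = 4)
    (h2 : ∀ u, degree E u ≤ 2)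
    (ih : ∀ F ⊆ E, F.card < E.card → Good F) {e f : Finset V} {v : V}
    (he : e ∈ E) (hf : f ∈ E) (hve : v ∈ e) (hvf : v ∈ f) (hef : e ≠ f) (s : ℕ)
    (hs : s ≤ 1) (hc : (degTwo E ∩ (e ∪ f)).card + s ≤ 7)
    (hg : ∀ g ∈ E, g ≠ e → g ≠ f → ((degTwo E \ (e ∪ f)) ∩ g).card = 3 →
      (degTwo E ∩ (e ∪ f)).card + s ≤ 6 ∨
      ∃ h ∈ E, h ≠ e ∧ h ≠ f ∧ h ≠ g ∧ 1 ≤ (((degTwo E \ (e ∪ f)) \ g) ∩ h).card ∧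
        (((degTwo E \ (e ∪ f)) \ g) ∩ h).card ≤ 3) :
    9 * gameVal true E + (degTwo E).card + s ≤ 9 * E.card := by
  obtain ⟨m1, m2, m3, m4⟩ := move_two h2 he hf hve hvf hef
  have h2' : ∀ u, degree (delV E v) u ≤ 2 := fun u =>
    (degree_mono (delV_subset E v) u).trans (h2 u)
  have h4' : ∀ e ∈ delV E v, e.card = 4 := fun e he => h4 e (delV_subset E v he)
  rcases game_round_le E v (mem_playable.2 ⟨e, he, hve⟩) with h | ⟨u, hu, h⟩
  · have : (degTwo (delV E v)).card ≤ 9 * (delV E v).card := by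
      have := (ih (delV E v) (delV_subset E v) (by omega)).1
      omega
    omega
  · have hu0 := degree_pos.1 hu
    have hsub : delV (delV E v) u ⊆ E := (delV_subset _ _).trans (delV_subset _ _)
    rcases (by have := h2' u; omega : degree (delV E v) u = 1 ∨ degree (delV E v) u = 2) with d | d
    · obtain ⟨g, hgE, hug, hu2, n1, n2, n3, n4⟩ := move_one h2' d
      have hk : (degTwo (delV E v) ∩ g).card ≤ 3 := by
        have : degTwo (delV E v) ∩ g ⊆ g.erase u := by
          intro x hx
          simp only [Finset.mem_inter, Finset.mem_erase] at hx ⊢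
          exact ⟨fun h => hu2 (h ▸ hx.1), hx.2⟩
        have := Finset.card_le_card this
        rw [Finset.card_erase_of_mem hug, h4' g hgE] at this
        exact this
      have hgood := ih (delV (delV E v) u) hsub (by omega)
      have hP := hgood.1
      have hgE' := (m4 g).1 hgE
      by_cases hk3 : (degTwo (delV E v) ∩ g).card = 3
      · rcases hg g hgE'.1 hgE'.2.1 hgE'.2.2 (by rw [← m1]; exact hk3) with
          h6 | ⟨h', a1, a2, a3, a4, a5, a6⟩
        · omega
        · have hQ := hgood.2 ⟨h', (n4 h').2 ⟨(m4 h').2 ⟨a1, a2, a3⟩, a4⟩, by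
            rw [n1, m1]; exact ⟨a5, a6⟩⟩
          omega
      · omega
    · have hu2 : u ∈ degTwo (delV E v) := by simp [degTwo, d]
      obtain ⟨a, ha, -, hua⟩ := exists_other (a := ∅) hu2
      obtain ⟨b, hb, hba, hub⟩ := exists_other (a := a) hu2
      obtain ⟨n1, n2, n3, n4⟩ := move_two h2' ha hb hua hub hba.symm
      have hP := (ih (delV (delV E v) u) hsub (by omega)).1
      have hk := cap_union h2' ha hb hba.symm
      have hk1 := Finset.card_le_card (Finset.inter_subset_right (s₁ := degTwo (delV E v)) (s₂ := a))
      have hk2 := Finset.card_le_card (Finset.inter_subset_right (s₁ := degTwo (delV E v)) (s₂ := b))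
      rw [h4' a ha] at hk1
      rw [h4' b hb] at hk2
      omega

lemma good_q {E : Finset (Finset V)} (h4 : ∀ e ∈ E, e.card = 4)
    (h2 : ∀ u, degree E u ≤ 2)
    (ih : ∀ F ⊆ E, F.card < E.card → Good F) (hD : Damaged E) :
    9 * gameVal true E + (degTwo E).card + 1 ≤ 9 * E.card := by
  by_cases hcheap : ∃ e ∈ E, ∃ f ∈ E, e ≠ f ∧ (e ∩ f).Nonempty ∧ (degTwo E ∩ (e ∪ f)).card ≤ 5
  · obtain ⟨e, he, f, hf, hef, ⟨v, hv⟩, hc⟩ := hcheap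
    rw [Finset.mem_inter] at hv
    exact pair_lemma h4 h2 ih he hf hv.1 hv.2 hef 1 le_rfl (by omega)
      (fun _ _ _ _ _ => Or.inl (by omega))
  · push Not at hcheap
    -- the cost of playing a common vertex of two edges
    have cost : ∀ e ∈ E, ∀ f ∈ E, e ≠ f → 1 ≤ (e ∩ f).card →
        6 + (e ∩ f).card ≤ (degTwo E ∩ e).card + (degTwo E ∩ f).card := by
      intro e he f hf hef hne
      have := hcheap e he f hf hef (Finset.card_pos.1 hne)
      have := cap_union h2 he hf hef
      omega
    have le4 : ∀ e ∈ E, (degTwo E ∩ e).card ≤ 4 := fun e he =>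
      (h4 e he) ▸ Finset.card_le_card Finset.inter_subset_right
    have pos : ∀ (u : V) (a b : Finset V), u ∈ a → u ∈ b → 1 ≤ (a ∩ b).card := fun u a b ha hb =>
      Finset.card_pos.2 ⟨u, Finset.mem_inter.2 ⟨ha, hb⟩⟩
    obtain ⟨e, he, he1, he3⟩ := hD
    obtain ⟨v, hv⟩ := Finset.card_pos.1 he1
    rw [Finset.mem_inter] at hv
    obtain ⟨f, hf, hfe, hvf⟩ := exists_other (a := e) hv.1
    have hef := hfe.symm
    have c1 := cost e he f hf hef (pos v e f hv.2 hvf)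
    have c2 := le4 f hf
    have c3 := pos v e f hv.2 hvf
    have c4 := cap_union h2 he hf hef
    refine pair_lemma h4 h2 ih he hf hv.2 hvf hef 1 le_rfl (by omega) ?_
    intro g hg hge hgf hg3
    right
    by_contra hcon
    push Not at hcon
    have hA6 : (degTwo E ∩ (e ∪ f)).card = 6 := by omega
    -- analysis of an edge meeting g in D'
    have main : ∀ u ∈ (degTwo E \ (e ∪ f)) ∩ g, ∃ h ∈ E, h ≠ e ∧ h ≠ f ∧ h ≠ g ∧ u ∈ h ∧
        (degTwo E ∩ h).card = 4 ∧ 4 ≤ (degTwo E ∩ (e ∪ f) ∩ h).card + (h ∩ g).card ∧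
        (h ∩ g).card ≤ 2 ∧ 1 ≤ (h ∩ g).card := by
      intro u hu
      simp only [Finset.mem_inter, Finset.mem_sdiff, Finset.mem_union, not_or] at hu
      obtain ⟨⟨huD, hue, huf⟩, hug⟩ := hu
      obtain ⟨h, hh, hhg, huh⟩ := exists_other (a := g) huD
      have hhe : h ≠ e := fun hh => hue (hh ▸ huh)
      have hhf : h ≠ f := fun hh => huf (hh ▸ huh)
      have hempty : ((degTwo E \ (e ∪ f)) \ g) ∩ h = ∅ := by
        by_contra hne
        have h1 := Finset.card_pos.2 (Finset.nonempty_iff_ne_empty.2 hne)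
        have h2 := hcon h hh hhe hhf hhg h1
        have h3 : ((degTwo E \ (e ∪ f)) \ g) ∩ h ⊆ h.erase u := by
          intro x hx
          simp only [Finset.mem_inter, Finset.mem_sdiff, Finset.mem_erase] at hx ⊢
          exact ⟨fun hxu => hx.1.2 (hxu ▸ hug), hx.2⟩
        have h3 := Finset.card_le_card h3
        rw [Finset.card_erase_of_mem huh, h4 h hh] at h3
        omega
      have hx : ∀ x ∈ h, x ∈ degTwo E → x ∉ g → x ∉ f → x ∈ e := by
        intro x hxh hxD hxg hxf
        by_contra hxe
        have : x ∈ ((degTwo E \ (e ∪ f)) \ g) ∩ h := by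
          simp only [Finset.mem_inter, Finset.mem_sdiff, Finset.mem_union]
          tauto
        rw [hempty] at this
        simp at this
      have s1 : degTwo E ∩ h ⊆ (h ∩ e) ∪ (h ∩ f) ∪ (h ∩ g) := by
        intro x hx'
        simp only [Finset.mem_inter, Finset.mem_union] at hx' ⊢
        have := hx x hx'.2 hx'.1
        tauto
      have s2 : degTwo E ∩ h ⊆ (degTwo E ∩ (e ∪ f) ∩ h) ∪ (h ∩ g) := by
        intro x hx'
        simp only [Finset.mem_inter, Finset.mem_union] at hx' ⊢
        have := hx x hx'.2 hx'.1
        tauto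
      have s1 := Finset.card_le_card s1
      have s2 := (Finset.card_le_card s2).trans (Finset.card_union_le _ _)
      have s3 := Finset.card_union_le ((h ∩ e) ∪ (h ∩ f)) (h ∩ g)
      have s4 := Finset.card_union_le (h ∩ e) (h ∩ f)
      have k1 := cost h hh e he hhe
      have k2 := cost h hh f hf hhf
      have k3 := cost h hh g hg hhg (pos u h g huh hug)
      have k4 := pos u h g huh hug
      have l1 := le4 h hh
      have l2 := le4 g hg
      refine ⟨h, hh, hhe, hhf, hhg, huh, ?_, ?_, ?_, ?_⟩ <;> omega
    obtain ⟨u, hu⟩ := Finset.card_pos.1 (by omega : 0 < ((degTwo E \ (e ∪ f)) ∩ g).card)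
    obtain ⟨h, hh, hhe, hhf, hhg, huh, a1, a2, a3, a4⟩ := main u hu
    have hex : ∃ u' ∈ (degTwo E \ (e ∪ f)) ∩ g, u' ∉ h := by
      by_contra hall
      push Not at hall
      have : (degTwo E \ (e ∪ f)) ∩ g ⊆ h ∩ g := by
        intro x hx
        exact Finset.mem_inter.2 ⟨hall x hx, (Finset.mem_inter.1 hx).2⟩
      have := Finset.card_le_card this
      omega
    obtain ⟨u', hu', hu'h⟩ := hex
    obtain ⟨h', hh', hhe', hhf', hhg', huh', b1, b2, b3, b4⟩ := main u' hu'
    have hhh : h ≠ h' := fun hx => hu'h (hx ▸ huh')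
    have vmem : ∀ k ∈ E, k ≠ e → k ≠ f → v ∉ k := fun k hk hke hkf hvk =>
      three_edges h2 hk he hf hvk hv.2 hvf hke hkf hef
    -- disjoint subsets
    have disj : ∀ k ∈ E, ∀ k' ∈ E, k ≠ e → k ≠ f → k' ≠ e → k' ≠ f → k ≠ k' →
        ∀ x, (x ∈ e ∨ x ∈ f) → x ∈ k → x ∉ k' := by
      intro k hk k' hk' h1 h2' h3 h4' h5 x hx hxk hxk'
      rcases hx with hx | hx
      · exact three_edges h2 hk hk' he hxk hxk' hx h5 h1 h3
      · exact three_edges h2 hk hk' hf hxk hxk' hx h5 h2' h4'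
    have t1 : ((degTwo E ∩ (e ∪ f) ∩ h) ∪ (degTwo E ∩ (e ∪ f) ∩ h') ∪
        (degTwo E ∩ (e ∪ f) ∩ g) ∪ {v}).card ≤ 6 := by
      rw [← hA6]
      apply Finset.card_le_card
      intro x hx
      simp only [Finset.mem_inter, Finset.mem_union, Finset.mem_singleton] at hx ⊢
      rcases hx with ((hx | hx) | hx) | hx
      · exact hx.1
      · exact hx.1
      · exact hx.1
      · subst hx; exact ⟨hv.1, Or.inl hv.2⟩
    rw [Finset.card_union_of_disjoint, Finset.card_union_of_disjoint,
      Finset.card_union_of_disjoint, Finset.card_singleton] at t1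
    rotate_left
    · rw [Finset.disjoint_left]
      intro x hx hx'
      simp only [Finset.mem_inter, Finset.mem_union] at hx hx'
      exact disj h hh h' hh' hhe hhf hhe' hhf' hhh x hx.1.2 hx.2 hx'.2
    · rw [Finset.disjoint_left]
      intro x hx hx'
      simp only [Finset.mem_inter, Finset.mem_union] at hx hx'
      rcases hx with hx | hx
      · exact disj h hh g hg hhe hhf hge hgf hhg x hx.1.2 hx.2 hx'.2
      · exact disj h' hh' g hg hhe' hhf' hge hgf hhg' x hx.1.2 hx.2 hx'.2
    · rw [Finset.disjoint_singleton_right]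
      simp only [Finset.mem_inter, Finset.mem_union]
      have w1 := vmem h hh hhe hhf
      have w2 := vmem h' hh' hhe' hhf'
      have w3 := vmem g hg hge hgf
      tauto
    have t2 : ((h ∩ g) ∪ (h' ∩ g)).card ≤ 3 := by
      rw [← hg3]
      apply Finset.card_le_card
      have aux : ∀ k ∈ E, k ≠ e → k ≠ f → k ≠ g → ∀ x, x ∈ k → x ∈ g →
          x ∈ (degTwo E \ (e ∪ f)) ∩ g := by
        intro k hk hke hkf hkg x hxk hxg
        have y1 := mem_degTwo h2 hk hg hxk hxg hkg
        have y2 := fun hx => disj k hk g hg hke hkf hge hgf hkg x hx hxk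
        simp only [Finset.mem_inter, Finset.mem_sdiff, Finset.mem_union]
        tauto
      intro x hx
      simp only [Finset.mem_union, Finset.mem_inter] at hx
      rcases hx with hx | hx
      · exact aux h hh hhe hhf hhg x hx.1 hx.2
      · exact aux h' hh' hhe' hhf' hhg' x hx.1 hx.2
    rw [Finset.card_union_of_disjoint] at t2
    rotate_left
    · rw [Finset.disjoint_left]
      intro x hx hx'
      simp only [Finset.mem_inter] at hx hx'
      exact three_edges h2 hh hh' hg hx.1 hx'.1 hx.2 hhh hhg hhg'
    have t3 : (degTwo E ∩ g).card ≤ 3 + (degTwo E ∩ (e ∪ f) ∩ g).card := by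
      rw [← hg3]
      refine (Finset.card_le_card ?_).trans (Finset.card_union_le _ _)
      intro x hx
      simp only [Finset.mem_inter, Finset.mem_union, Finset.mem_sdiff] at hx ⊢
      tauto
    have k1 := cost h hh g hg hhg a4
    have k2 := cost h' hh' g hg hhg' b4
    omega

lemma good_p {E : Finset (Finset V)} (h4 : ∀ e ∈ E, e.card = 4)
    (h2 : ∀ u, degree E u ≤ 2)
    (ih : ∀ F ⊆ E, F.card < E.card → Good F) (hD : ¬ Damaged E) :
    9 * gameVal true E + (degTwo E).card ≤ 9 * E.card := by
  by_cases hne : (degTwo E).Nonempty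
  swap
  · rw [Finset.not_nonempty_iff_eq_empty] at hne
    have := gameVal_true_le_card _ E rfl
    rw [hne, Finset.card_empty]
    omega
  have le4 : ∀ e ∈ E, (degTwo E ∩ e).card ≤ 4 := fun e he =>
    (h4 e he) ▸ Finset.card_le_card Finset.inter_subset_right
  have pos : ∀ (u : V) (a b : Finset V), u ∈ a → u ∈ b → 1 ≤ (a ∩ b).card := fun u a b ha hb =>
    Finset.card_pos.2 ⟨u, Finset.mem_inter.2 ⟨ha, hb⟩⟩
  by_cases hcheap : ∃ e ∈ E, ∃ f ∈ E, e ≠ f ∧ (e ∩ f).Nonempty ∧ (degTwo E ∩ (e ∪ f)).card ≤ 6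
  · obtain ⟨e, he, f, hf, hef, ⟨v, hv⟩, hc⟩ := hcheap
    rw [Finset.mem_inter] at hv
    exact pair_lemma h4 h2 ih he hf hv.1 hv.2 hef 0 (by omega) (by omega)
      (fun _ _ _ _ _ => Or.inl (by omega))
  · push Not at hcheap
    have cap1 : ∀ e ∈ E, ∀ f ∈ E, e ≠ f → (e ∩ f).card ≤ 1 := by
      intro e he f hf hef
      by_contra hlt
      have := hcheap e he f hf hef (Finset.card_pos.1 (by omega))
      have := cap_union h2 he hf hef
      have := le4 e he
      have := le4 f hf
      omega
    have full : ∀ (u : V), u ∈ degTwo E → ∀ e ∈ E, u ∈ e → e ⊆ degTwo E := by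
      intro u hu e he hue
      have h1 := pos u _ _ hu hue
      have h3 : ¬ (degTwo E ∩ e).card ≤ 3 := fun h => hD ⟨e, he, h1, h⟩
      have := Finset.eq_of_subset_of_card_le (Finset.inter_subset_right (s₁ := degTwo E) (s₂ := e))
        (by rw [h4 e he]; omega)
      exact Finset.inter_eq_right.1 this
    obtain ⟨v, hv⟩ := hne
    obtain ⟨e, he, -, hve⟩ := exists_other (a := ∅) hv
    obtain ⟨f, hf, hfe, hvf⟩ := exists_other (a := e) hv
    have c1 := cap_union h2 he hf hfe.symm
    have c2 := pos v e f hve hvf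
    have c3 := le4 e he
    have c4 := le4 f hf
    refine pair_lemma h4 h2 ih he hf hve hvf hfe.symm 0 (by omega) (by omega) ?_
    intro g hg hge hgf hg3
    right
    obtain ⟨u, hu⟩ := Finset.card_pos.1 (by omega : 0 < ((degTwo E \ (e ∪ f)) ∩ g).card)
    simp only [Finset.mem_inter, Finset.mem_sdiff, Finset.mem_union, not_or] at hu
    obtain ⟨⟨huD, hue, huf⟩, hug⟩ := hu
    obtain ⟨h, hh, hhg, huh⟩ := exists_other (a := g) huD
    have hhe : h ≠ e := fun hh => hue (hh ▸ huh)
    have hhf : h ≠ f := fun hh => huf (hh ▸ huh)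
    refine ⟨h, hh, hhe, hhf, hhg, ?_, ?_⟩
    · have hfull := full u huD h hh huh
      have : h ⊆ ((h ∩ e) ∪ (h ∩ f) ∪ (h ∩ g)) ∪ ((degTwo E \ (e ∪ f)) \ g) ∩ h := by
        intro x hx
        have := hfull hx
        simp only [Finset.mem_inter, Finset.mem_sdiff, Finset.mem_union]
        tauto
      have s1 := Finset.card_le_card this
      have s2 := Finset.card_union_le ((h ∩ e) ∪ (h ∩ f) ∪ (h ∩ g))
        (((degTwo E \ (e ∪ f)) \ g) ∩ h)
      have s3 := Finset.card_union_le ((h ∩ e) ∪ (h ∩ f)) (h ∩ g)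
      have s4 := Finset.card_union_le (h ∩ e) (h ∩ f)
      have k1 := cap1 h hh e he hhe
      have k2 := cap1 h hh f hf hhf
      have k3 := cap1 h hh g hg hhg
      have := h4 h hh
      omega
    · have h3 : ((degTwo E \ (e ∪ f)) \ g) ∩ h ⊆ h.erase u := by
        intro x hx
        simp only [Finset.mem_inter, Finset.mem_sdiff, Finset.mem_erase] at hx ⊢
        exact ⟨fun hxu => hx.1.2 (hxu ▸ hug), hx.2⟩
      have h3 := Finset.card_le_card h3
      rw [Finset.card_erase_of_mem huh, h4 h hh] at h3
      omega

lemma good_all (n : ℕ) : ∀ E : Finset (Finset V), E.card = n → (∀ e ∈ E, e.card = 4) →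
    (∀ u, degree E u ≤ 2) → Good E := by
  induction n using Nat.strong_induction_on with
  | _ n ih =>
    intro E hE h4 h2
    have ih' : ∀ F ⊆ E, F.card < E.card → Good F := fun F hF hlt =>
      ih F.card (hE ▸ hlt) F rfl (fun e he => h4 e (hF he))
        (fun u => (degree_mono hF u).trans (h2 u))
    by_cases hD : Damaged E
    · have := good_q h4 h2 ih' hD
      exact ⟨by omega, fun _ => this⟩
    · exact ⟨good_p h4 h2 ih' hD, fun h => absurd h hD⟩

lemma vertexWeight_mono {a b d : ℕ} (hd : d ≤ a) (hab : a ≤ b) :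
    vertexWeight a d ≤ vertexWeight b d := by
  unfold vertexWeight
  split_ifs <;> omega

lemma degree_le_maxDegree (E : Finset (Finset V)) (v : V) : degree E v ≤ maxDegree E :=
  Finset.le_sup (f := degree E) (Finset.mem_univ v)

lemma maxDegree_mono {E F : Finset (Finset V)} (h : E ⊆ F) : maxDegree E ≤ maxDegree F :=
  Finset.sup_mono_fun (fun v _ => degree_mono h v)

/-- The weight of a hypergraph. -/
def wt (E : Finset (Finset V)) : ℕ :=
  852 * E.card + ∑ v : V, vertexWeight (maxDegree E) (degree E v)

lemma small_case (E : Finset (Finset V)) (h4 : ∀ e ∈ E, e.card = 4) (hM : maxDegree E ≤ 2) :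
    3024 * gameVal true E ≤ wt E := by
  have h2 : ∀ u, degree E u ≤ 2 := fun u => (degree_le_maxDegree E u).trans hM
  have hP := (good_all _ E rfl h4 h2).1
  have hsum : ∑ v : V, vertexWeight (maxDegree E) (degree E v) + 336 * (degTwo E).card
      = 543 * (4 * E.card) := by
    rw [← sum_degree_four E h4, degTwo, Finset.card_filter, Finset.mul_sum, Finset.mul_sum,
      ← Finset.sum_add_distrib]
    apply Finset.sum_congr rfl
    intro v _
    have := h2 v
    unfold vertexWeight
    split_ifs <;> omega
  unfold wt
  omega

/-- One round for maximum degree at least three. -/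
lemma big_case (E : Finset (Finset V)) (h4 : ∀ e ∈ E, e.card = 4) (c : ℕ)
    (hg : ∀ a b, a ≤ b → b ≤ maxDegree E →
      vertexWeight (maxDegree E) a + c * (b - a) ≤ vertexWeight (maxDegree E) b)
    (hM : 3 ≤ maxDegree E)
    (hnum : 6048 ≤ 852 * maxDegree E + vertexWeight (maxDegree E) (maxDegree E)
      + 3 * c * maxDegree E + 852 + vertexWeight (maxDegree E) 1 + 3 * c)
    (hnum1 : 3024 ≤ 852 * maxDegree E + vertexWeight (maxDegree E) (maxDegree E))
    (ih : ∀ F ⊆ E, F.card < E.card → 3024 * gameVal true F ≤ wt F) :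
    3024 * gameVal true E ≤ wt E := by
  have h0 : vertexWeight (maxDegree E) 0 = 0 := by simp [vertexWeight]
  have hVne : (Finset.univ : Finset V).Nonempty := by
    by_contra hcon
    rw [Finset.not_nonempty_iff_eq_empty] at hcon
    have : maxDegree E = 0 := by rw [maxDegree, hcon]; rfl
    omega
  obtain ⟨v, -, hv⟩ := Finset.exists_mem_eq_sup _ hVne (degree E)
  change maxDegree E = degree E v at hv
  have hpv : v ∈ playable E := degree_pos.2 (by omega)
  have d1 := weight_drop E h4 (vertexWeight (maxDegree E)) c (maxDegree E)
    (degree_le_maxDegree E) h0 hg v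
  rw [← hv] at d1
  have c1 := card_delV E v
  unfold wt
  rcases game_round_le E v hpv with h | ⟨u, hu, h⟩
  · omega
  · have d2 := weight_drop (delV E v) (fun e he => h4 e (delV_subset E v he))
      (vertexWeight (maxDegree E)) c (maxDegree E)
      (fun u => (degree_mono (delV_subset E v) u).trans (degree_le_maxDegree E u)) h0 hg u
    have hu0 := degree_pos.1 hu
    have c2 := card_delV (delV E v) u
    have hsub : delV (delV E v) u ⊆ E := (delV_subset _ _).trans (delV_subset _ _)
    have hI := ih _ hsub (by omega)
    unfold wt at hI
    have hmono : ∑ x : V, vertexWeight (maxDegree (delV (delV E v) u))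
          (degree (delV (delV E v) u) x) ≤
        ∑ x : V, vertexWeight (maxDegree E) (degree (delV (delV E v) u) x) :=
      Finset.sum_le_sum fun x _ =>
        vertexWeight_mono (degree_le_maxDegree _ x) (maxDegree_mono hsub)
    have hk : degree (delV E v) u ≤ maxDegree E :=
      (degree_mono (delV_subset E v) u).trans (degree_le_maxDegree E u)
    have hg1 := hg 1 _ hu0 hk
    have hg2 : vertexWeight (maxDegree E) 1 ≤ vertexWeight (maxDegree E) (degree (delV E v) u) :=
      le_trans (Nat.le_add_right _ _) hg1
    have hg3 : 3 * c ≤ 3 * c * degree (delV E v) u := Nat.le_mul_of_pos_right _ hu0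
    omega

lemma main_bound (n : ℕ) : ∀ E : Finset (Finset V), E.card = n → (∀ e ∈ E, e.card = 4) →
    3024 * gameVal true E ≤ wt E := by
  induction n using Nat.strong_induction_on with
  | _ n ih =>
    intro E hE h4
    have ih' : ∀ F ⊆ E, F.card < E.card → 3024 * gameVal true F ≤ wt F := fun F hF hlt =>
      ih F.card (hE ▸ hlt) F rfl (fun e he => h4 e (hF he))
    rcases (by omega : maxDegree E ≤ 2 ∨ maxDegree E = 3 ∨ maxDegree E = 4 ∨ 5 ≤ maxDegree E)
      with h | h | h | h
    · exact small_case E h4 h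
    · apply big_case E h4 95 _ (by rw [h]) _ _ ih' <;> rw [h]
      · intro a b hab hb
        unfold vertexWeight
        split_ifs <;> omega
      · simp [vertexWeight]
      · simp [vertexWeight]
    · apply big_case E h4 7 _ (by rw [h]; norm_num) _ _ ih' <;> rw [h]
      · intro a b hab hb
        unfold vertexWeight
        split_ifs <;> omega
      · simp [vertexWeight]
      · simp [vertexWeight]
    · apply big_case E h4 0 _ (le_trans (by norm_num) h) _ _ ih'
      · intro a b hab hb
        unfold vertexWeight
        split_ifs <;> omega
      · have e1 : vertexWeight (maxDegree E) (maxDegree E) = 852 := by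
          unfold vertexWeight
          rw [if_neg (by omega), if_pos h]
        have e2 : vertexWeight (maxDegree E) 1 = 852 := by
          unfold vertexWeight
          rw [if_neg (by omega), if_pos h]
        rw [e1, e2]
        omega
      · omega

/-- If `H` is a `4`-uniform hypergraph with weight
`w(H) = 852 m(H) + Σ_{v ∈ V(H)} f(d_H(v))`, then `3024 τ_g(H) ≤ w(H)`. -/
theorem gameTransversalNum_weight_bound_of_four_uniform
    {V : Type} [Fintype V] [DecidableEq V] (E : Finset (Finset V))
    (h4 : ∀ e ∈ E, e.card = 4) :
    3024 * gameTransversalNum E ≤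
      852 * E.card + ∑ v : V, vertexWeight (maxDegree E) (degree E v) := by
  exact main_bound _ E rfl h4
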